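/- arXiv:1805.03163 — 11 statements merged into one kernel-verified Lean document; each statement's English description precedes it below -/
import Mathlib

section
/- Let F : (Fin n → Bool) → (Fin n → Bool) be monotone with respect to the pointwise order. If X is a periodic point of F (there exists p ≥ 1 with F^[p] X = X) and Y = F^[j] X for some j with Y ≠ X, then X and Y are incomparable: neither X ≤ Y nor Y ≤ X. (That is, the states contained in a limit cycle form an antichain.) -/
theorem stmt_1 {n : ℕ}
    (F : (Fin n → Bool) → (Fin n → Bool)) (hF : Monotone F)
    (X Y : Fin n → Bool) (p : ℕ) (hp : 1 ≤ p) (hper : F^[p] X = X)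
    (j : ℕ) (hY : Y = F^[j] X) (hne : Y ≠ X) :
    ¬ X ≤ Y ∧ ¬ Y ≤ X := by
  have hG : Monotone (F^[j]) := hF.iterate j
  have hGp : (F^[j])^[p] X = X := by
    rw [← Function.iterate_mul, Nat.mul_comm, Function.iterate_mul]
    exact Function.iterate_fixed hper j
  subst hY
  constructor
  · intro h
    have h1 := hG.monotone_iterate_of_le_map h hp
    simp only [Function.iterate_one, hGp] at h1
    exact hne (le_antisymm h1 h)
  · intro h
    have h1 := hG.antitone_iterate_of_map_le h hp
    simp only [Function.iterate_one, hGp] at h1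
    exact hne (le_antisymm h h1)
end

section
/- Let (F_i)_{i : Fin n} be a family of monotone coordinate-update maps on Fin n → Bool, let π be a permutation of Fin n, and suppose Z is a fixed point of F_π (F_π Z = Z). If X ≤ Z, then for every permutation σ of Fin n and every k ≥ 0, F_σ^[k] X ≤ Z; dually, if Z ≤ X, then Z ≤ F_σ^[k] X for every σ and k. -/
/-- The SDS map `F_{π(n-1)} ∘ ⋯ ∘ F_{π(1)} ∘ F_{π(0)}`: vertex `π 0` is updated first. -/
def seqComp {n : ℕ} (F : Fin n → (Fin n → Bool) → (Fin n → Bool))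
    (π : Equiv.Perm (Fin n)) (X : Fin n → Bool) : Fin n → Bool :=
  (List.finRange n).foldl (fun Y i => F (π i) Y) X

theorem foldl_coord {n : ℕ} (F : Fin n → (Fin n → Bool) → (Fin n → Bool))
    (hupd : ∀ (i : Fin n) (X : Fin n → Bool) (j : Fin n), j ≠ i → F i X j = X j)
    (π : Equiv.Perm (Fin n)) (l : List (Fin n)) (a : Fin n) (ha : a ∉ l) (Y : Fin n → Bool) :
    l.foldl (fun Y i => F (π i) Y) Y (π a) = Y (π a) := by
  induction l generalizing Y with
  | nil => rfl
  | cons b t ih =>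
    rw [List.mem_cons, not_or] at ha
    rw [List.foldl_cons, ih ha.2]
    exact hupd _ _ _ (fun h => ha.1 (π.injective h))

theorem foldl_fixed {n : ℕ} (F : Fin n → (Fin n → Bool) → (Fin n → Bool))
    (hupd : ∀ (i : Fin n) (X : Fin n → Bool) (j : Fin n), j ≠ i → F i X j = X j)
    (π : Equiv.Perm (Fin n)) (Z : Fin n → Bool) (l : List (Fin n)) (hl : l.Nodup)
    (hZ : l.foldl (fun Y i => F (π i) Y) Z = Z) : ∀ i ∈ l, F (π i) Z = Z := by
  induction l with
  | nil => simp
  | cons b t ih =>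
    rw [List.nodup_cons] at hl
    rw [List.foldl_cons] at hZ
    have hb : F (π b) Z = Z := by
      funext j
      by_cases hj : j = π b
      · subst hj
        rw [← foldl_coord F hupd π t b hl.1 (F (π b) Z), hZ]
      · exact hupd _ _ _ hj
    rw [hb] at hZ
    intro i hi
    rcases List.mem_cons.1 hi with rfl | hi
    · exact hb
    · exact ih hl.2 hZ i hi

theorem seqComp_inv {n : ℕ} (F : Fin n → (Fin n → Bool) → (Fin n → Bool))
    (P : (Fin n → Bool) → Prop) (hP : ∀ i Y, P Y → P (F i Y))
    (σ : Equiv.Perm (Fin n)) (k : ℕ) (X : Fin n → Bool) (hX : P X) :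
    P ((seqComp F σ)^[k] X) := by
  have hfold : ∀ (l : List (Fin n)) (Y : Fin n → Bool), P Y →
      P (l.foldl (fun Y i => F (σ i) Y) Y) := by
    intro l
    induction l with
    | nil => exact fun Y h => h
    | cons b t ih => exact fun Y h => ih _ (hP _ _ h)
  induction k generalizing X with
  | zero => exact hX
  | succ k ih => exact ih _ (hfold _ _ hX)

theorem stmt_4 {n : ℕ} (F : Fin n → (Fin n → Bool) → (Fin n → Bool))
    (hupd : ∀ (i : Fin n) (X : Fin n → Bool) (j : Fin n), j ≠ i → F i X j = X j)
    (hmono : ∀ i : Fin n, Monotone (F i))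
    (π : Equiv.Perm (Fin n)) (Z : Fin n → Bool) (hZ : seqComp F π Z = Z)
    (X : Fin n → Bool) :
    (X ≤ Z → ∀ (σ : Equiv.Perm (Fin n)) (k : ℕ), (seqComp F σ)^[k] X ≤ Z) ∧
    (Z ≤ X → ∀ (σ : Equiv.Perm (Fin n)) (k : ℕ), Z ≤ (seqComp F σ)^[k] X) := by
  have hfix : ∀ i, F i Z = Z := fun i => by
    have h := foldl_fixed F hupd π Z _ (List.nodup_finRange n) hZ (π.symm i)
      (List.mem_finRange _)
    rwa [Equiv.apply_symm_apply] at h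
  refine ⟨fun hX σ k => ?_, fun hX σ k => ?_⟩
  · exact seqComp_inv F (fun Y => Y ≤ Z)
      (fun i Y h => (hmono i h).trans_eq (hfix i)) σ k X hX
  · exact seqComp_inv F (fun Y => Z ≤ Y)
      (fun i Y h => (hfix i).symm.trans_le (hmono i h)) σ k X hX
end

section
/- Let F : (Fin n → Bool) → (Fin n → Bool) be monotone with respect to the pointwise order. Then there exist fixed points Z_min and Z_max of F (F Z_min = Z_min and F Z_max = Z_max) such that every periodic point X of F (i.e., F^[p] X = X for some p ≥ 1) satisfies Z_min ≤ X ≤ Z_max. -/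
theorem aux_periodic {α : Type*} [CompleteLattice α] (F : α → α) (hF : Monotone F) :
    ∃ Zmin Zmax : α, F Zmin = Zmin ∧ F Zmax = Zmax ∧
      ∀ X : α, (∃ p : ℕ, 1 ≤ p ∧ F^[p] X = X) → Zmin ≤ X ∧ X ≤ Zmax := by
  let f : α →o α := ⟨F, hF⟩
  refine ⟨OrderHom.lfp f, OrderHom.gfp f, f.map_lfp, f.map_gfp, ?_⟩
  rintro X ⟨p, hp, hX⟩
  have key : ∀ k, ∃ j, F^[k] X = F (F^[j] X) := by
    intro k
    refine ⟨k + (p - 1), ?_⟩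
    rw [← Function.iterate_succ_apply' F]
    have : (k + (p - 1)).succ = k + p := by omega
    rw [this, Function.iterate_add_apply, hX]
  constructor
  · refine le_trans (f.lfp_le (a := ⨅ k : ℕ, F^[k] X) ?_) (iInf_le (fun k : ℕ => F^[k] X) 0)
    refine le_iInf fun k => ?_
    obtain ⟨j, hj⟩ := key k
    rw [hj]
    exact hF (iInf_le _ j)
  · refine le_trans (le_iSup (fun k : ℕ => F^[k] X) 0) (f.le_gfp (a := ⨆ k : ℕ, F^[k] X) ?_)
    refine iSup_le fun k => ?_
    obtain ⟨j, hj⟩ := key k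
    rw [hj]
    exact hF (le_iSup (fun k : ℕ => F^[k] X) j)

theorem stmt_5 {n : ℕ}
    (F : (Fin n → Bool) → (Fin n → Bool)) (hF : Monotone F) :
    ∃ Zmin Zmax : Fin n → Bool, F Zmin = Zmin ∧ F Zmax = Zmax ∧
      ∀ X : Fin n → Bool, (∃ p : ℕ, 1 ≤ p ∧ F^[p] X = X) → Zmin ≤ X ∧ X ≤ Zmax := by
  exact aux_periodic F hF
end

section
/- Let F : (Fin n → Bool) → (Fin n → Bool) be monotone with respect to the pointwise order. If F has a non-trivial periodic point, i.e., there exist X and p ≥ 1 with F^[p] X = X and F X ≠ X, then F has at least two distinct fixed points: there exist Z₁ ≠ Z₂ with F Z₁ = Z₁ and F Z₂ = Z₂. -/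
theorem stmt_6 {n : ℕ}
    (F : (Fin n → Bool) → (Fin n → Bool)) (hF : Monotone F)
    (X : Fin n → Bool) (p : ℕ) (hp : 1 ≤ p) (hper : F^[p] X = X) (hnt : F X ≠ X) :
    ∃ Z₁ Z₂ : Fin n → Bool, Z₁ ≠ Z₂ ∧ F Z₁ = Z₁ ∧ F Z₂ = Z₂ := by
  let f : (Fin n → Bool) →o (Fin n → Bool) := ⟨F, hF⟩
  -- every point of the orbit is the image of a point of the orbit
  have hpre : ∀ i : ℕ, ∃ j : ℕ, F^[i] X = F (F^[j] X) := by
    intro i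
    cases i with
    | zero =>
      refine ⟨p - 1, ?_⟩
      rw [← Function.iterate_succ_apply' F, Nat.succ_eq_add_one, Nat.sub_add_cancel hp, hper]
      rfl
    | succ k => exact ⟨k, Function.iterate_succ_apply' F k X⟩
  have hup : X ≤ f.gfp := by
    have h1 : (⨆ i : ℕ, F^[i] X) ≤ f.gfp := by
      apply f.le_gfp
      apply iSup_le
      intro i
      obtain ⟨j, hj⟩ := hpre i
      rw [hj]
      exact hF (le_iSup (fun i : ℕ => F^[i] X) j)
    exact (le_iSup (fun i : ℕ => F^[i] X) 0).trans h1
  have hlo : f.lfp ≤ X := by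
    have h1 : f.lfp ≤ (⨅ i : ℕ, F^[i] X) := by
      apply f.lfp_le
      apply le_iInf
      intro i
      obtain ⟨j, hj⟩ := hpre i
      rw [hj]
      exact hF (iInf_le (fun i : ℕ => F^[i] X) j)
    exact h1.trans (iInf_le (fun i : ℕ => F^[i] X) 0)
  have hl : F f.lfp = f.lfp := f.map_lfp
  have hg : F f.gfp = f.gfp := f.map_gfp
  refine ⟨f.lfp, f.gfp, ?_, hl, hg⟩
  intro h
  have hX : X = f.lfp := le_antisymm (h ▸ hup) hlo
  exact hnt (by rw [hX]; exact hl)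
end

section
/- Let S be a finite type and let g, h : S → S be arbitrary maps. Then g maps the set of periodic points of h ∘ g bijectively onto the set of periodic points of g ∘ h; that is, g restricted to Per(h ∘ g) := {x | ∃ p ≥ 1, (h ∘ g)^[p] x = x} is an injection onto Per(g ∘ h) := {x | ∃ p ≥ 1, (g ∘ h)^[p] x = x} (Set.BijOn g (Per (h ∘ g)) (Per (g ∘ h))). -/
theorem semiconj_iter_aux {S : Type*} (g h : S → S) (n : ℕ) (x : S) :
    (g ∘ h)^[n] (g x) = g ((h ∘ g)^[n] x) := by
  have hs : Function.Semiconj g (h ∘ g) (g ∘ h) := fun _ => rfl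
  exact ((hs.iterate_right n) x).symm

theorem stmt_7 {S : Type*} [Finite S] (g h : S → S) :
    Set.BijOn g {x | ∃ p : ℕ, 1 ≤ p ∧ (h ∘ g)^[p] x = x}
      {x | ∃ p : ℕ, 1 ≤ p ∧ (g ∘ h)^[p] x = x} := by
  refine ⟨?_, ?_, ?_⟩
  · rintro x ⟨p, hp, hx⟩
    exact ⟨p, hp, by rw [semiconj_iter_aux, hx]⟩
  · intro x hx y hy hxy
    exact (Function.bijOn_periodicPts (h ∘ g)).injOn hx hy (congrArg h hxy)
  · rintro y ⟨p, hp, hy⟩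
    obtain ⟨q, rfl⟩ : ∃ q, p = q + 1 := ⟨p - 1, by omega⟩
    refine ⟨h ((g ∘ h)^[q] y), ⟨q + 1, hp, ?_⟩, ?_⟩
    · rw [semiconj_iter_aux, ← Function.iterate_add_apply, Nat.add_comm,
        Function.iterate_add_apply, hy]
    · rw [Function.iterate_succ_apply'] at hy
      exact hy
end

section
/- Let (F_i)_{i : Fin n} be a family of monotone coordinate-update maps on Fin n → Bool, let π be a permutation of Fin n, and let F_π := F_{π(n-1)} ∘ ⋯ ∘ F_{π(0)}. Let 0 ≤ k ≤ n and suppose X is of type S₀(π,k) or of type S₁(π,k). Then X is a Garden-of-Eden state of F_π (X is not in the range of F_π) or X reaches a fixed point of F_π (there exists m with F_π (F_π^[m] X) = F_π^[m] X). -/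
/-- `X` is of type `S₀(π,k)`: the first `k` vertices in the schedule are `false`, the rest `true`. -/
def isS0 {n : ℕ} (π : Equiv.Perm (Fin n)) (k : ℕ) (X : Fin n → Bool) : Prop :=
  ∀ i : Fin n, (i.val < k → X (π i) = false) ∧ (k ≤ i.val → X (π i) = true)

/-- `X` is of type `S₁(π,k)`: the first `k` vertices in the schedule are `true`, the rest `false`. -/
def isS1 {n : ℕ} (π : Equiv.Perm (Fin n)) (k : ℕ) (X : Fin n → Bool) : Prop :=
  ∀ i : Fin n, (i.val < k → X (π i) = true) ∧ (k ≤ i.val → X (π i) = false)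

theorem foldl_unchanged {n : ℕ} (F : Fin n → (Fin n → Bool) → (Fin n → Bool))
    (hupd : ∀ (i : Fin n) (X : Fin n → Bool) (j : Fin n), j ≠ i → F i X j = X j)
    (π : Equiv.Perm (Fin n)) (i : Fin n) (l : List (Fin n)) (hl : i ∉ l) (Y : Fin n → Bool) :
    l.foldl (fun Y i => F (π i) Y) Y (π i) = Y (π i) := by
  induction l generalizing Y with
  | nil => rfl
  | cons a l ih =>
    simp only [List.mem_cons, not_or] at hl
    rw [List.foldl_cons, ih hl.2]
    exact hupd _ _ _ (fun h => hl.1 (π.injective h))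

theorem exists_mid {n : ℕ} (F : Fin n → (Fin n → Bool) → (Fin n → Bool))
    (hupd : ∀ (i : Fin n) (X : Fin n → Bool) (j : Fin n), j ≠ i → F i X j = X j)
    (π : Equiv.Perm (Fin n)) (Y : Fin n → Bool) (j : Fin n) :
    ∃ W : Fin n → Bool, (∀ i < j, W (π i) = seqComp F π Y (π i)) ∧
      F (π j) W (π j) = seqComp F π Y (π j) := by
  obtain ⟨s, t, hst⟩ := List.append_of_mem (List.mem_finRange j)
  have hp : (List.finRange n).Pairwise (· < ·) := List.pairwise_lt_finRange n
  rw [hst, List.pairwise_append, List.pairwise_cons] at hp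
  have ht : ∀ i ≤ j, i ∉ t := fun i hi hit => absurd (hp.2.1.1 i hit) (not_lt.2 hi)
  refine ⟨s.foldl (fun Y i => F (π i) Y) Y, fun i hi => ?_, ?_⟩
  · rw [seqComp, hst, List.foldl_append, List.foldl_cons,
      foldl_unchanged F hupd π i t (ht i hi.le)]
    exact (hupd _ _ _ (fun h => hi.ne (π.injective h))).symm
  · rw [seqComp, hst, List.foldl_append, List.foldl_cons,
      foldl_unchanged F hupd π j t (ht j le_rfl)]

theorem seqComp_mono {n : ℕ} (F : Fin n → (Fin n → Bool) → (Fin n → Bool))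
    (hmono : ∀ i : Fin n, Monotone (F i)) (π : Equiv.Perm (Fin n)) :
    Monotone (seqComp F π) := by
  unfold seqComp
  generalize List.finRange n = l
  induction l with
  | nil => exact monotone_id
  | cons a l ih => exact fun A B h => ih (hmono _ h)

theorem le_seqComp {n : ℕ} (F : Fin n → (Fin n → Bool) → (Fin n → Bool))
    (hmono : ∀ i : Fin n, Monotone (F i)) (π : Equiv.Perm (Fin n)) (X : Fin n → Bool)
    (h : ∀ j, X ≤ F (π j) X) : X ≤ seqComp F π X := by
  unfold seqComp
  suffices H : ∀ (l : List (Fin n)) (Y : Fin n → Bool), X ≤ Y →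
      X ≤ l.foldl (fun Y i => F (π i) Y) Y from H _ X le_rfl
  intro l
  induction l with
  | nil => exact fun Y hY => hY
  | cons a l ih => exact fun Y hY => ih _ ((h a).trans (hmono _ hY))

theorem seqComp_le {n : ℕ} (F : Fin n → (Fin n → Bool) → (Fin n → Bool))
    (hmono : ∀ i : Fin n, Monotone (F i)) (π : Equiv.Perm (Fin n)) (X : Fin n → Bool)
    (h : ∀ j, F (π j) X ≤ X) : seqComp F π X ≤ X := by
  unfold seqComp
  suffices H : ∀ (l : List (Fin n)) (Y : Fin n → Bool), Y ≤ X →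
      l.foldl (fun Y i => F (π i) Y) Y ≤ X from H _ X le_rfl
  intro l
  induction l with
  | nil => exact fun Y hY => hY
  | cons a l ih => exact fun Y hY => ih _ ((hmono _ hY).trans (h a))

theorem stmt_8 {n : ℕ} (F : Fin n → (Fin n → Bool) → (Fin n → Bool))
    (hupd : ∀ (i : Fin n) (X : Fin n → Bool) (j : Fin n), j ≠ i → F i X j = X j)
    (hmono : ∀ i : Fin n, Monotone (F i))
    (π : Equiv.Perm (Fin n)) (k : ℕ) (hk : k ≤ n)
    (X : Fin n → Bool) (hX : isS0 π k X ∨ isS1 π k X) :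
    X ∉ Set.range (seqComp F π) ∨
      ∃ m : ℕ, seqComp F π ((seqComp F π)^[m] X) = (seqComp F π)^[m] X := by
  rw [or_iff_not_imp_left, not_not]
  rintro ⟨Y, rfl⟩
  have hM := seqComp_mono F hmono π
  generalize hXe : seqComp F π Y = X at hX ⊢
  rcases hX with hX | hX
  · have hle : X ≤ seqComp F π X := by
      apply le_seqComp F hmono
      intro j v
      by_cases hv : v = π j
      · subst hv
        by_cases hj : j.val < k
        · rw [(hX j).1 hj]; exact Bool.false_le _
        · obtain ⟨W, hW, hWj⟩ := exists_mid F hupd π Y j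
          rw [hXe] at hW hWj
          rw [← hWj]
          refine hmono _ (fun u => ?_) _
          obtain ⟨i, rfl⟩ := π.surjective u
          rcases lt_or_ge i j with hij | hij
          · exact (hW i hij).le
          · rw [(hX i).2 (by have : j.val ≤ i.val := hij
                             omega)]
            exact Bool.le_true _
      · exact (hupd _ _ _ hv).ge
    have hmon := hM.monotone_iterate_of_le_map hle
    obtain ⟨m, hm⟩ := WellFoundedGT.monotone_chain_condition
      (⟨fun m => (seqComp F π)^[m] X, hmon⟩ : ℕ →o (Fin n → Bool))
    refine ⟨m, ?_⟩
    have := hm (m + 1) (Nat.le_succ m)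
    rw [← Function.iterate_succ_apply' (seqComp F π) m X]
    exact this.symm
  · have hle : seqComp F π X ≤ X := by
      apply seqComp_le F hmono
      intro j v
      by_cases hv : v = π j
      · subst hv
        by_cases hj : j.val < k
        · rw [(hX j).1 hj]; exact Bool.le_true _
        · obtain ⟨W, hW, hWj⟩ := exists_mid F hupd π Y j
          rw [hXe] at hW hWj
          rw [← hWj]
          refine hmono _ (fun u => ?_) _
          obtain ⟨i, rfl⟩ := π.surjective u
          rcases lt_or_ge i j with hij | hij
          · exact (hW i hij).ge
          · rw [(hX i).2 (by have : j.val ≤ i.val := hij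
                             omega)]
            exact Bool.false_le _
      · exact (hupd _ _ _ hv).le
    have hmon := hM.antitone_iterate_of_map_le hle
    obtain ⟨m, hm⟩ := WellFoundedGT.monotone_chain_condition
      (⟨fun m => OrderDual.toDual ((seqComp F π)^[m] X), fun a b h => hmon h⟩ :
        ℕ →o (Fin n → Bool)ᵒᵈ)
    refine ⟨m, ?_⟩
    have := hm (m + 1) (Nat.le_succ m)
    rw [← Function.iterate_succ_apply' (seqComp F π) m X]
    exact (OrderDual.toDual.injective this).symm
end

section
/- Let (F_i)_{i : Fin n} be a family of monotone coordinate-update maps on Fin n → Bool, let π be a permutation of Fin n, and let F_π := F_{π(n-1)} ∘ ⋯ ∘ F_{π(0)}. Let 0 ≤ k ≤ n. If X is of type S₀(π,k) and X lies in the range of F_π, then X ≤ F_π X; if X is of type S₁(π,k) and X lies in the range of F_π, then F_π X ≤ X. Consequently, if X is of type S₀(π,k) and F_π X is not comparable to X, or X is of type S₀(π,k) with F_π X < X, or X is of type S₁(π,k) with X < F_π X, then X is a Garden-of-Eden state of F_π. -/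
theorem fold_mono_aux {n : ℕ} (F : Fin n → (Fin n → Bool) → (Fin n → Bool))
    (hmono : ∀ i : Fin n, Monotone (F i)) (π : Equiv.Perm (Fin n)) (l : List (Fin n)) :
    Monotone (fun X => l.foldl (fun Y i => F (π i) Y) X) := by
  induction l with
  | nil => exact fun _ _ h => h
  | cons a l ih => exact fun _ _ h => ih (hmono (π a) h)

theorem fold_fix_aux {n : ℕ} (F : Fin n → (Fin n → Bool) → (Fin n → Bool))
    (hupd : ∀ (i : Fin n) (X : Fin n → Bool) (j : Fin n), j ≠ i → F i X j = X j)
    (π : Equiv.Perm (Fin n)) (l : List (Fin n)) (j : Fin n) (hj : j ∉ l) (X : Fin n → Bool) :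
    l.foldl (fun Y i => F (π i) Y) X (π j) = X (π j) := by
  induction l generalizing X with
  | nil => rfl
  | cons a l ih =>
    simp only [List.mem_cons, not_or] at hj
    rw [List.foldl_cons, ih hj.2]
    exact hupd _ _ _ (fun h => hj.1 (π.injective h))

theorem split_aux {n : ℕ} (k : ℕ) : ∃ l₁ l₂ : List (Fin n), List.finRange n = l₁ ++ l₂ ∧
    (∀ i : Fin n, i.val < k → i ∉ l₂) ∧ (∀ i : Fin n, k ≤ i.val → i ∉ l₁) := by
  refine ⟨(List.finRange n).take k, (List.finRange n).drop k, (List.take_append_drop _ _).symm,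
    ?_, ?_⟩
  · intro i hi h
    obtain ⟨m, hm, rfl⟩ := List.mem_drop_iff_getElem.1 h
    simp at hi
  · intro i hi h
    obtain ⟨m, hm, rfl⟩ := List.mem_take_iff_getElem.1 h
    simp at hi hm
    omega

theorem stmt_9 {n : ℕ} (F : Fin n → (Fin n → Bool) → (Fin n → Bool))
    (hupd : ∀ (i : Fin n) (X : Fin n → Bool) (j : Fin n), j ≠ i → F i X j = X j)
    (hmono : ∀ i : Fin n, Monotone (F i))
    (π : Equiv.Perm (Fin n)) (k : ℕ) (hk : k ≤ n) (X : Fin n → Bool) :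
    (isS0 π k X → X ∈ Set.range (seqComp F π) → X ≤ seqComp F π X) ∧
    (isS1 π k X → X ∈ Set.range (seqComp F π) → seqComp F π X ≤ X) ∧
    (isS0 π k X → (¬ X ≤ seqComp F π X ∧ ¬ seqComp F π X ≤ X) →
      X ∉ Set.range (seqComp F π)) ∧
    (isS0 π k X → seqComp F π X < X → X ∉ Set.range (seqComp F π)) ∧
    (isS1 π k X → X < seqComp F π X → X ∉ Set.range (seqComp F π)) := by
  obtain ⟨l₁, l₂, hl, h2, h1⟩ := split_aux (n := n) k
  have key : ∀ Z, seqComp F π Z = l₂.foldl (fun Y i => F (π i) Y)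
      (l₁.foldl (fun Y i => F (π i) Y) Z) := by
    intro Z
    rw [seqComp, hl, List.foldl_append]
  have A : isS0 π k X → X ∈ Set.range (seqComp F π) → X ≤ seqComp F π X := by
    rintro hX ⟨Y, hY⟩
    have hle : l₁.foldl (fun Y i => F (π i) Y) Y ≤ l₁.foldl (fun Y i => F (π i) Y) X := by
      refine le_trans (b := X) (fun j => ?_) (fun j => ?_) <;>
        obtain ⟨i, rfl⟩ := π.surjective j <;> rcases lt_or_ge i.val k with h | h
      · rw [← hY, key, fold_fix_aux F hupd π l₂ i (h2 i h)]
      · rw [(hX i).2 h]; exact Bool.le_true _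
      · rw [(hX i).1 h]; exact Bool.false_le _
      · rw [fold_fix_aux F hupd π l₁ i (h1 i h)]
    have := fold_mono_aux F hmono π l₂ hle
    simp only [← key] at this
    rwa [hY] at this
  have B : isS1 π k X → X ∈ Set.range (seqComp F π) → seqComp F π X ≤ X := by
    rintro hX ⟨Y, hY⟩
    have hle : l₁.foldl (fun Y i => F (π i) Y) X ≤ l₁.foldl (fun Y i => F (π i) Y) Y := by
      refine le_trans (b := X) (fun j => ?_) (fun j => ?_) <;>
        obtain ⟨i, rfl⟩ := π.surjective j <;> rcases lt_or_ge i.val k with h | h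
      · rw [(hX i).1 h]; exact Bool.le_true _
      · rw [fold_fix_aux F hupd π l₁ i (h1 i h)]
      · rw [← hY, key, fold_fix_aux F hupd π l₂ i (h2 i h)]
      · rw [(hX i).2 h]; exact Bool.false_le _
    have := fold_mono_aux F hmono π l₂ hle
    simp only [← key] at this
    rwa [hY] at this
  exact ⟨A, B, fun h h' hr => h'.1 (A h hr), fun h h' hr => h'.not_ge (A h hr),
    fun h h' hr => h'.not_ge (B h hr)⟩
end

section
/- Let n ≥ 2 and let (F_i)_{i : Fin n} be a family of monotone coordinate-update maps on Fin n → Bool. Then the number of pairs (X, π), where X : Fin n → Bool is a state, π is a permutation of Fin n, and X is a Garden-of-Eden state of F_π or X reaches a fixed point of F_π, is at least 2 · n · n!. Consequently, the probability that a uniformly random state is a GoE state or reaches a fixed point under a uniformly random update schedule is at least n / 2^(n−1). -/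
/-- The set of "good" pairs `(X, π)`: `X` is a Garden-of-Eden state of `F_π` or
`X` reaches a fixed point of `F_π`. -/
def goodPairs {n : ℕ} (F : Fin n → (Fin n → Bool) → (Fin n → Bool)) :
    Set ((Fin n → Bool) × Equiv.Perm (Fin n)) :=
  {p | p.1 ∉ Set.range (seqComp F p.2) ∨
    ∃ k : ℕ, seqComp F p.2 ((seqComp F p.2)^[k] p.1) = (seqComp F p.2)^[k] p.1}

theorem foldl_mono_aux {n : ℕ} (F : Fin n → (Fin n → Bool) → (Fin n → Bool))
    (hmono : ∀ i : Fin n, Monotone (F i)) (l : List (Fin n)) :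
    Monotone (fun X => l.foldl (fun Y i => F i Y) X) := by
  induction l with
  | nil => exact monotone_id
  | cons a l ih => exact fun X Y h => ih (hmono a h)

theorem foldl_off_aux {n : ℕ} (F : Fin n → (Fin n → Bool) → (Fin n → Bool))
    (hupd : ∀ (i : Fin n) (X : Fin n → Bool) (j : Fin n), j ≠ i → F i X j = X j)
    (l : List (Fin n)) (X : Fin n → Bool) (j : Fin n) (hj : j ∉ l) :
    l.foldl (fun Y i => F i Y) X j = X j := by
  induction l generalizing X with
  | nil => rfl
  | cons a l ih =>
    simp only [List.mem_cons, not_or] at hj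
    rw [List.foldl_cons, ih _ hj.2, hupd _ _ _ hj.1]

theorem fix_of_comparable {n : ℕ} (f : (Fin n → Bool) → (Fin n → Bool)) (hf : Monotone f)
    (X : Fin n → Bool) (h : f X ≤ X ∨ X ≤ f X) : ∃ k : ℕ, f (f^[k] X) = f^[k] X := by
  rcases h with h | h
  · have ha := hf.antitone_iterate_of_map_le h
    obtain ⟨k, hk⟩ := WellFoundedGT.monotone_chain_condition
      (α := (Fin n → Bool)ᵒᵈ) ⟨fun m => OrderDual.toDual (f^[m] X), fun a b hab => ha hab⟩
    refine ⟨k, ?_⟩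
    have := hk (k + 1) (Nat.le_succ k)
    rw [← Function.iterate_succ_apply' f]
    exact (OrderDual.toDual.injective this).symm
  · have ha := hf.monotone_iterate_of_le_map h
    obtain ⟨k, hk⟩ := WellFoundedGT.monotone_chain_condition
      (α := (Fin n → Bool)) ⟨fun m => (f^[m] X), fun a b hab => ha hab⟩
    refine ⟨k, ?_⟩
    have := hk (k + 1) (Nat.le_succ k)
    rw [← Function.iterate_succ_apply' f]
    exact this.symm

/-- The state equal to `b` on the first `k+1` updated vertices and `!b` elsewhere. -/
def prefState {n : ℕ} (π : Equiv.Perm (Fin n)) (k : Fin n) (b : Bool) : Fin n → Bool :=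
  fun j => if π.symm j ≤ k then b else !b

theorem seqComp_eq_aux {n : ℕ} (F : Fin n → (Fin n → Bool) → (Fin n → Bool))
    (π : Equiv.Perm (Fin n)) (X : Fin n → Bool) :
    seqComp F π X = ((List.finRange n).map π).foldl (fun Y i => F i Y) X := by
  rw [List.foldl_map]; rfl

theorem good_prefState {n : ℕ}
    (F : Fin n → (Fin n → Bool) → (Fin n → Bool))
    (hupd : ∀ (i : Fin n) (X : Fin n → Bool) (j : Fin n), j ≠ i → F i X j = X j)
    (hmono : ∀ i : Fin n, Monotone (F i)) (π : Equiv.Perm (Fin n)) (k : Fin n) (b : Bool) :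
    (prefState π k b, π) ∈ goodPairs F := by
  by_cases hr : prefState π k b ∈ Set.range (seqComp F π)
  swap
  · exact Or.inl hr
  right
  have hm : Monotone (seqComp F π) := by
    intro X Y h
    rw [seqComp_eq_aux, seqComp_eq_aux]
    exact foldl_mono_aux F hmono _ h
  refine fix_of_comparable _ hm _ ?_
  obtain ⟨Y, hY⟩ := hr
  obtain ⟨X, hX⟩ : ∃ X, X = prefState π k b := ⟨_, rfl⟩
  have hl : ∃ l₁ l₂ : List (Fin n), (List.finRange n).map π = l₁ ++ l₂ ∧
      (∀ j ∈ l₁, j ∉ l₂) ∧ ∀ j, j ∈ l₁ ↔ π.symm j ≤ k := by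
    have hnd : ((List.finRange n).map π).Nodup := (List.nodup_finRange n).map π.injective
    refine ⟨((List.finRange n).map π).take (k + 1), ((List.finRange n).map π).drop (k + 1),
      (List.take_append_drop _ _).symm, ?_, ?_⟩
    · intro j h1 h2
      exact List.disjoint_take_drop hnd le_rfl h1 h2
    · intro j
      rw [List.mem_take_iff_getElem]
      constructor
      · rintro ⟨i, hi, rfl⟩
        simp at hi ⊢
        rw [Fin.le_def]
        simp
        omega
      · intro h
        refine ⟨(π.symm j : ℕ), ?_, ?_⟩
        · have := (π.symm j).2
          have := Fin.le_def.1 h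
          simp
          omega
        · simp
  obtain ⟨l₁, l₂, hl, hdis, hmem⟩ := hl
  have hY' : l₂.foldl (fun Y i => F i Y) (l₁.foldl (fun Y i => F i Y) Y) = X := by
    rw [hX, ← hY, seqComp_eq_aux, hl, List.foldl_append]
  have hXX : seqComp F π X = l₂.foldl (fun Y i => F i Y) (l₁.foldl (fun Y i => F i Y) X) := by
    rw [seqComp_eq_aux, hl, List.foldl_append]
  have h1 : ∀ j ∈ l₁, l₁.foldl (fun Y i => F i Y) Y j = b := by
    intro j hj
    rw [← foldl_off_aux F hupd l₂ (l₁.foldl (fun Y i => F i Y) Y) j (hdis j hj), hY', hX]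
    simp [prefState, (hmem j).1 hj]
  have h2 : ∀ j, j ∉ l₁ → l₁.foldl (fun Y i => F i Y) X j = !b := by
    intro j hj
    rw [foldl_off_aux F hupd l₁ _ j hj, hX]
    have : ¬ π.symm j ≤ k := fun h => hj ((hmem j).2 h)
    simp only [prefState, if_neg this]
  rw [← hX]
  cases b
  · right
    rw [hXX]
    conv_lhs => rw [← hY']
    refine foldl_mono_aux F hmono l₂ fun j => ?_
    by_cases hj : j ∈ l₁
    · rw [h1 j hj]; exact Bool.false_le _
    · rw [h2 j hj]; exact Bool.le_true _
  · left
    rw [hXX]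
    conv_rhs => rw [← hY']
    refine foldl_mono_aux F hmono l₂ fun j => ?_
    by_cases hj : j ∈ l₁
    · rw [h1 j hj]; exact Bool.le_true _
    · rw [h2 j hj]; exact Bool.false_le _

theorem prefState_inj {n : ℕ} (hn : 2 ≤ n) (π : Equiv.Perm (Fin n)) (k k' : Fin n) (b b' : Bool)
    (h : prefState π k b = prefState π k' b') : k = k' ∧ b = b' := by
  have h0 := congrFun h (π ⟨0, by omega⟩)
  have hk := congrFun h (π k)
  have hk' := congrFun h (π k')
  have e : ∀ m : Fin n, (⟨0, by omega⟩ : Fin n) ≤ m := fun m => Fin.le_def.2 (Nat.zero_le _)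
  simp only [prefState, Equiv.symm_apply_apply, e, le_refl, if_true] at h0 hk hk'
  subst h0
  refine ⟨le_antisymm ?_ ?_, rfl⟩
  · by_contra hc
    rw [if_neg hc] at hk
    cases b <;> simp at hk
  · by_contra hc
    rw [if_neg hc] at hk'
    cases b <;> simp at hk'

theorem stmt_14 {n : ℕ} (hn : 2 ≤ n)
    (F : Fin n → (Fin n → Bool) → (Fin n → Bool))
    (hupd : ∀ (i : Fin n) (X : Fin n → Bool) (j : Fin n), j ≠ i → F i X j = X j)
    (hmono : ∀ i : Fin n, Monotone (F i)) :
    2 * n * Nat.factorial n ≤ (goodPairs F).ncard ∧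
    (n : ℝ) / 2 ^ (n - 1) ≤
      ((goodPairs F).ncard : ℝ) / (2 ^ n * Nat.factorial n) := by
  have key : 2 * n * Nat.factorial n ≤ (goodPairs F).ncard := by
    let g : (Bool × Fin n) × Equiv.Perm (Fin n) → (Fin n → Bool) × Equiv.Perm (Fin n) :=
      fun t => (prefState t.2 t.1.2 t.1.1, t.2)
    have hg : Function.Injective g := by
      rintro ⟨⟨b, k⟩, π⟩ ⟨⟨b', k'⟩, π'⟩ h
      simp only [g, Prod.mk.injEq] at h
      obtain ⟨h, rfl⟩ := h
      obtain ⟨rfl, rfl⟩ := prefState_inj hn π k k' b b' h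
      rfl
    have hsub : Set.range g ⊆ goodPairs F := by
      rintro _ ⟨t, rfl⟩
      exact good_prefState F hupd hmono _ _ _
    have hc := Set.ncard_le_ncard hsub (Set.toFinite _)
    rw [← Set.image_univ, Set.ncard_image_of_injective _ hg, Set.ncard_univ,
      Nat.card_eq_fintype_card, Fintype.card_prod, Fintype.card_prod, Fintype.card_perm,
      Fintype.card_bool, Fintype.card_fin] at hc
    exact hc
  refine ⟨key, ?_⟩
  have hf : (0 : ℝ) < Nat.factorial n := by exact_mod_cast Nat.factorial_pos n
  have hp : (2 : ℝ) ^ n = 2 * 2 ^ (n - 1) := by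
    rw [← pow_succ', Nat.sub_add_cancel (by omega)]
  have hp0 : (0 : ℝ) < 2 ^ (n - 1) := by positivity
  have key' : (2 : ℝ) * n * Nat.factorial n ≤ (goodPairs F).ncard := by exact_mod_cast key
  rw [hp, div_le_div_iff₀ hp0 (by positivity)]
  have := mul_le_mul_of_nonneg_right key' hp0.le
  linarith
end

section
/- Let a, b ≥ 1, put n = a + b, and let (F_i)_{i : Fin n} be a family of monotone coordinate-update maps on Fin n → Bool. Let U = {i : Fin n | i < a} and V = {i : Fin n | a ≤ i}, and assume F_i ∘ F_j = F_j ∘ F_i whenever i and j both lie in U or both lie in V (which holds for a bipartite dependency graph with parts U, V). Let F := F_{n-1} ∘ ⋯ ∘ F_1 ∘ F_0 (all of U updated first, then all of V). Then the number of states X : Fin n → Bool that are Garden-of-Eden states of F or reach a fixed point of F is at least 2^(a+1) + 2^(b+1) − 4. -/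
namespace Aux15

variable {n : ℕ} (F : Fin n → (Fin n → Bool) → (Fin n → Bool))

def c (l : List (Fin n)) (X : Fin n → Bool) : Fin n → Bool :=
  l.foldl (fun Y i => F i Y) X

theorem c_cons (i : Fin n) (l : List (Fin n)) (X) : c F (i :: l) X = c F l (F i X) := rfl

theorem c_mono (hmono : ∀ i, Monotone (F i)) (l : List (Fin n)) : Monotone (c F l) := by
  induction l with
  | nil => exact monotone_id
  | cons i l ih => exact ih.comp (hmono i)

theorem c_notMem (hupd : ∀ i X j, j ≠ i → F i X j = X j) (l : List (Fin n)) :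
    ∀ X j, j ∉ l → c F l X j = X j := by
  induction l with
  | nil => intro X j _; rfl
  | cons i l ih =>
    intro X j hj
    rw [List.mem_cons, not_or] at hj
    rw [c_cons, ih _ _ hj.2, hupd _ _ _ hj.1]

theorem idem (hupd : ∀ i X j, j ≠ i → F i X j = X j) (hmono : ∀ i, Monotone (F i))
    (i : Fin n) (X) : F i (F i X) = F i X := by
  have key : F i (F i X) i = F i X i := by
    by_cases h : F i X i = X i
    · have : F i X = X := by
        funext j
        by_cases hj : j = i
        · subst hj; exact h
        · exact hupd i X j hj
      rw [this, this]
    · cases h1 : F i X i with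
      | true =>
        have hx : X ≤ F i X := by
          intro j
          by_cases hj : j = i
          · subst hj; rw [h1]; exact Bool.le_true _
          · rw [hupd i X j hj]
        have := hmono i hx i
        rw [h1] at this
        exact top_le_iff.1 this
      | false =>
        have hx : F i X ≤ X := by
          intro j
          by_cases hj : j = i
          · subst hj; rw [h1]; exact Bool.false_le _
          · rw [hupd i X j hj]
        have := hmono i hx i
        rw [h1] at this
        exact le_bot_iff.1 this
  funext j
  by_cases hj : j = i
  · subst hj; exact key
  · exact hupd i _ j hj

theorem c_comm (i : Fin n) (l : List (Fin n)) (h : ∀ j ∈ l, F i ∘ F j = F j ∘ F i) :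
    ∀ X, F i (c F l X) = c F l (F i X) := by
  induction l with
  | nil => intro X; rfl
  | cons k l ih =>
    intro X
    rw [c_cons, c_cons, ih (fun j hj => h j (List.mem_cons_of_mem _ hj))]
    exact congrArg (c F l) (congrFun (h k List.mem_cons_self) X)

theorem c_idem (hupd : ∀ i X j, j ≠ i → F i X j = X j) (hmono : ∀ i, Monotone (F i))
    (l : List (Fin n)) (h : ∀ i ∈ l, ∀ j ∈ l, F i ∘ F j = F j ∘ F i) :
    ∀ X, c F l (c F l X) = c F l X := by
  induction l with
  | nil => intro X; rfl
  | cons k l ih =>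
    intro X
    have ih' := ih (fun i hi j hj => h i (List.mem_cons_of_mem _ hi) j (List.mem_cons_of_mem _ hj))
    rw [c_cons, c_cons, c_comm F k l
      (fun j hj => h k List.mem_cons_self j (List.mem_cons_of_mem _ hj)), ih',
      idem F hupd hmono]

theorem reach_of_le {f : (Fin n → Bool) → (Fin n → Bool)} (hf : Monotone f) {X}
    (h : X ≤ f X) : ∃ k : ℕ, f (f^[k] X) = f^[k] X := by
  obtain ⟨k, hk⟩ := WellFoundedGT.monotone_chain_condition
    (⟨fun k => f^[k] X, hf.monotone_iterate_of_le_map h⟩ : ℕ →o (Fin n → Bool))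
  refine ⟨k, ?_⟩
  rw [← Function.iterate_succ_apply' f]
  exact (hk (k + 1) (Nat.le_succ k)).symm

theorem reach_of_ge {f : (Fin n → Bool) → (Fin n → Bool)} (hf : Monotone f) {X}
    (h : f X ≤ X) : ∃ k : ℕ, f (f^[k] X) = f^[k] X := by
  obtain ⟨k, hk⟩ := WellFoundedGT.monotone_chain_condition
    (⟨fun k => OrderDual.toDual (f^[k] X), hf.antitone_iterate_of_map_le h⟩ :
      ℕ →o (Fin n → Bool)ᵒᵈ)
  refine ⟨k, ?_⟩
  rw [← Function.iterate_succ_apply' f]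
  exact (hk (k + 1) (Nat.le_succ k)).symm

theorem count {a b : ℕ} (ha : 1 ≤ a) (hb : 1 ≤ b) (S : Set (Fin (a + b) → Bool))
    (h1 : ∀ v, Fin.append (⊥ : Fin a → Bool) v ∈ S)
    (h2 : ∀ v, Fin.append (⊤ : Fin a → Bool) v ∈ S)
    (h3 : ∀ u, Fin.append u (⊥ : Fin b → Bool) ∈ S)
    (h4 : ∀ u, Fin.append u (⊤ : Fin b → Bool) ∈ S) :
    2 ^ (a + 1) + 2 ^ (b + 1) - 4 ≤ S.ncard := by
  have na : (⊥ : Fin a → Bool) ≠ ⊤ := fun h => by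
    have := congrFun h ⟨0, ha⟩; simp at this
  have nb : (⊥ : Fin b → Bool) ≠ ⊤ := fun h => by
    have := congrFun h ⟨0, hb⟩; simp at this
  let A : Set ((Fin a → Bool) × (Fin b → Bool)) := {⊥, ⊤} ×ˢ Set.univ
  let B : Set ((Fin a → Bool) × (Fin b → Bool)) := Set.univ ×ˢ {⊥, ⊤}
  have hA : A.ncard = 2 * 2 ^ b := by
    simp [A, Set.ncard_prod, Set.ncard_pair na, Set.ncard_univ]
  have hB : B.ncard = 2 ^ a * 2 := by
    simp [B, Set.ncard_prod, Set.ncard_pair nb, Set.ncard_univ]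
  have hI : (A ∩ B).ncard = 4 := by
    simp [A, B, Set.prod_inter_prod, Set.ncard_prod, Set.ncard_pair na, Set.ncard_pair nb]
  have hu := Set.ncard_union_add_ncard_inter A B
  have him : (Fin.appendEquiv a b '' (A ∪ B)).ncard = (A ∪ B).ncard :=
    Set.ncard_image_of_injective _ (Fin.appendEquiv a b).injective
  have hsub : Fin.appendEquiv a b '' (A ∪ B) ⊆ S := by
    rintro _ ⟨⟨u, v⟩, h, rfl⟩
    simp only [A, B, Set.mem_union, Set.mem_prod, Set.mem_insert_iff, Set.mem_singleton_iff,
      Set.mem_univ, and_true, true_and] at h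
    rcases h with (rfl | rfl) | (rfl | rfl)
    · exact h1 v
    · exact h2 v
    · exact h3 u
    · exact h4 u
  have := Set.ncard_le_ncard hsub (Set.toFinite S)
  rw [pow_succ, pow_succ]
  omega

end Aux15

theorem stmt_15 {a b : ℕ} (ha : 1 ≤ a) (hb : 1 ≤ b)
    (F : Fin (a + b) → (Fin (a + b) → Bool) → (Fin (a + b) → Bool))
    (hupd : ∀ (i : Fin (a + b)) (X : Fin (a + b) → Bool) (j : Fin (a + b)),
      j ≠ i → F i X j = X j)
    (hmono : ∀ i : Fin (a + b), Monotone (F i))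
    (hcomm : ∀ i j : Fin (a + b),
      ((i.val < a ∧ j.val < a) ∨ (a ≤ i.val ∧ a ≤ j.val)) → F i ∘ F j = F j ∘ F i) :
    2 ^ (a + 1) + 2 ^ (b + 1) - 4 ≤
      ({X : Fin (a + b) → Bool |
        X ∉ Set.range (seqComp F (Equiv.refl (Fin (a + b)))) ∨
        ∃ k : ℕ, seqComp F (Equiv.refl (Fin (a + b)))
            ((seqComp F (Equiv.refl (Fin (a + b))))^[k] X) =
          (seqComp F (Equiv.refl (Fin (a + b))))^[k] X}).ncard := by
  have hlU : ∀ i ∈ (List.finRange (a + b)).take a, i.val < a := by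
    intro i hi
    obtain ⟨k, hk, rfl⟩ := List.mem_iff_getElem.1 hi
    simp at hk ⊢
    omega
  have hlV : ∀ i ∈ (List.finRange (a + b)).drop a, a ≤ i.val := by
    intro i hi
    obtain ⟨k, hk, rfl⟩ := List.mem_iff_getElem.1 hi
    simp
  have hF : ∀ X, seqComp F (Equiv.refl (Fin (a + b))) X =
      Aux15.c F ((List.finRange (a + b)).drop a)
        (Aux15.c F ((List.finRange (a + b)).take a) X) := by
    intro X
    simp only [Aux15.c]
    rw [← List.foldl_append, List.take_append_drop]
    rfl
  generalize (List.finRange (a + b)).take a = lU at *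
  generalize (List.finRange (a + b)).drop a = lV at *
  generalize seqComp F (Equiv.refl (Fin (a + b))) = Φ at *
  have mG := Aux15.c_mono F hmono lU
  have mH := Aux15.c_mono F hmono lV
  have iG := Aux15.c_idem F hupd hmono lU
    (fun i hi j hj => hcomm i j (Or.inl ⟨hlU i hi, hlU j hj⟩))
  have iH := Aux15.c_idem F hupd hmono lV
    (fun i hi j hj => hcomm i j (Or.inr ⟨hlV i hi, hlV j hj⟩))
  have nG : ∀ X (j : Fin b), Aux15.c F lU X (Fin.natAdd a j) = X (Fin.natAdd a j) :=
    fun X j => Aux15.c_notMem F hupd lU X _ (fun h => by have := hlU _ h; simp at this)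
  have nH : ∀ X (j : Fin a), Aux15.c F lV X (Fin.castAdd b j) = X (Fin.castAdd b j) :=
    fun X j => Aux15.c_notMem F hupd lV X _ (fun h => by
      have := hlV _ h; have := j.isLt; simp at *; omega)
  generalize Aux15.c F lU = G at *
  generalize Aux15.c F lV = H at *
  have mΦ : Monotone Φ := fun X Y h => by rw [hF, hF]; exact mH (mG h)
  have le_iff : ∀ X Y : Fin (a + b) → Bool,
      (∀ j : Fin a, X (Fin.castAdd b j) ≤ Y (Fin.castAdd b j)) →
      (∀ j : Fin b, X (Fin.natAdd a j) ≤ Y (Fin.natAdd a j)) → X ≤ Y :=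
    fun X Y h1 h2 j => Fin.addCases (motive := fun j => X j ≤ Y j) h1 h2 j
  apply Aux15.count ha hb
  · intro v
    rw [Set.mem_setOf_eq, or_iff_not_imp_left, not_not]
    rintro ⟨Y, hY⟩
    generalize hX : Fin.append _ v = X at *
    refine Aux15.reach_of_le mΦ ?_
    have hHX : H X = X := by rw [← hY, hF, iH]
    have : X ≤ G X := le_iff _ _ (fun j => by rw [← hX]; simp) (fun j => (nG X j).ge)
    rw [hF]
    exact hHX.symm.le.trans (mH this)
  · intro v
    rw [Set.mem_setOf_eq, or_iff_not_imp_left, not_not]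
    rintro ⟨Y, hY⟩
    generalize hX : Fin.append _ v = X at *
    refine Aux15.reach_of_ge mΦ ?_
    have hHX : H X = X := by rw [← hY, hF, iH]
    have : G X ≤ X := le_iff _ _ (fun j => by rw [← hX]; simp [Bool.le_true]) (fun j => (nG X j).le)
    rw [hF]
    exact (mH this).trans hHX.le
  · intro v
    rw [Set.mem_setOf_eq, or_iff_not_imp_left, not_not]
    rintro ⟨Y, hY⟩
    generalize hX : Fin.append v _ = X at *
    refine Aux15.reach_of_ge mΦ ?_
    rw [hF] at hY
    have : X ≤ G Y := le_iff _ _ (fun j => by rw [← hY, nH]) (fun j => by rw [← hX]; simp)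
    have h2 := mG this
    rw [iG] at h2
    rw [hF]
    exact (mH h2).trans hY.le
  · intro v
    rw [Set.mem_setOf_eq, or_iff_not_imp_left, not_not]
    rintro ⟨Y, hY⟩
    generalize hX : Fin.append v _ = X at *
    refine Aux15.reach_of_le mΦ ?_
    rw [hF] at hY
    have : G Y ≤ X := le_iff _ _ (fun j => by rw [← hY, nH])
      (fun j => by rw [← hX]; simp [Bool.le_true])
    have h2 := mG this
    rw [iG] at h2
    rw [hF]
    exact hY.symm.le.trans (mH h2)
end

section
/- For every n ≥ 1 there exist a monotone map F : (Fin n → Bool) → (Fin n → Bool) (pointwise order) and a state X : Fin n → Bool such that X is a periodic point of F (F^[p] X = X for some p ≥ 1) and the orbit {Y | ∃ k, F^[k] X = Y} has cardinality exactly choose(n, ⌊n/2⌋); that is, F has a limit cycle of length choose(n, ⌊n/2⌋). -/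
theorem stmt_17 (n : ℕ) (hn : 1 ≤ n) :
    ∃ (F : (Fin n → Bool) → (Fin n → Bool)) (X : Fin n → Bool),
      Monotone F ∧ (∃ p : ℕ, 1 ≤ p ∧ F^[p] X = X) ∧
      ({Y : Fin n → Bool | ∃ k : ℕ, F^[k] X = Y}).ncard = Nat.choose n (n / 2) := by
  classical
  obtain ⟨m, hm⟩ : ∃ m, m = n / 2 := ⟨_, rfl⟩
  rw [← hm]
  obtain ⟨N, hN⟩ : ∃ N, N = Nat.choose n m := ⟨_, rfl⟩
  rw [← hN]
  have hpos : 0 < N := by rw [hN]; exact Nat.choose_pos (by omega)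
  haveI : NeZero N := ⟨hpos.ne'⟩
  let w : (Fin n → Bool) → Finset (Fin n) := fun Y => Finset.univ.filter (fun j => Y j = true)
  have hwmono : ∀ Y Z, Y ≤ Z → w Y ⊆ w Z := by
    intro Y Z h j hj
    simp only [w, Finset.mem_filter, Finset.mem_univ, true_and] at hj ⊢
    have := h j
    rw [hj] at this
    exact top_le_iff.1 this
  have hwinj : ∀ Y Z, w Y = w Z → Y = Z := by
    intro Y Z h
    funext j
    have := Finset.ext_iff.1 h j
    simp only [w, Finset.mem_filter, Finset.mem_univ, true_and] at this
    exact Bool.eq_iff_iff.2 this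
  have hcard : (Finset.powersetCard m (Finset.univ : Finset (Fin n))).card = N := by
    simp [hN]
  let e := Finset.equivFinOfCardEq hcard
  let G : Fin N → (Fin n → Bool) := fun i j => decide (j ∈ (e.symm i).1)
  have hwG : ∀ i, w (G i) = (e.symm i).1 := by
    intro i; ext j; simp [w, G]
  have hGinj : Function.Injective G := by
    intro a b h
    apply e.symm.injective
    apply Subtype.ext
    rw [← hwG, ← hwG, h]
  have hGcard : ∀ i, (w (G i)).card = m := by
    intro i
    rw [hwG]
    exact (Finset.mem_powersetCard.1 (e.symm i).2).2
  have hGsurj : ∀ Y, (w Y).card = m → ∃ i, G i = Y := by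
    intro Y hY
    refine ⟨e ⟨w Y, Finset.mem_powersetCard.2 ⟨Finset.subset_univ _, hY⟩⟩, ?_⟩
    apply hwinj
    rw [hwG]
    simp
  let F : (Fin n → Bool) → (Fin n → Bool) := fun Y =>
    if (w Y).card < m then ⊥ else
      if h : ∃ i, G i = Y then G (h.choose + 1) else ⊤
  have hFG : ∀ i, F (G i) = G (i + 1) := by
    intro i
    have h : ∃ i', G i' = G i := ⟨i, rfl⟩
    have h2 : h.choose = i := hGinj h.choose_spec
    simp only [F]
    rw [if_neg (by rw [hGcard]; omega), dif_pos h, h2]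
  have hit : ∀ k : ℕ, F^[k] (G 0) = G (Fin.ofNat N k) := by
    intro k
    induction k with
    | zero =>
      simp only [Function.iterate_zero, id]
      congr 1
    | succ k ih =>
      rw [Function.iterate_succ_apply', ih, hFG]
      congr 1
      apply Fin.ext
      simp [Fin.val_add, Fin.ofNat]
  refine ⟨F, G 0, ?_, ⟨N, hpos, ?_⟩, ?_⟩
  · intro Y Z hYZ
    have hs := hwmono _ _ hYZ
    have hc := Finset.card_le_card hs
    by_cases h1 : (w Y).card < m
    · have : F Y = ⊥ := if_pos h1
      rw [this]; exact bot_le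
    by_cases h2 : (w Z).card = m
    · have : Y = Z := hwinj _ _ (Finset.eq_of_subset_of_card_le hs (by omega))
      rw [this]
    · have : F Z = ⊤ := by
        simp only [F]
        rw [if_neg (by omega), dif_neg]
        rintro ⟨i, rfl⟩
        exact h2 (hGcard i)
      rw [this]; exact le_top
  · rw [hit]
    congr 1
    apply Fin.ext
    simp [Fin.ofNat]
  · have : {Y : Fin n → Bool | ∃ k : ℕ, F^[k] (G 0) = Y} = Set.range G := by
      ext Y
      constructor
      · rintro ⟨k, rfl⟩
        exact ⟨_, (hit k).symm⟩
      · rintro ⟨i, rfl⟩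
        exact ⟨i.1, by rw [hit]; congr 1; apply Fin.ext; simp [Fin.ofNat, Nat.mod_eq_of_lt i.2]⟩
    rw [this, ← Set.image_univ, Set.ncard_image_of_injective _ hGinj]
    simp
end

section
/- Let M : (Fin n → Bool) → (Fin n → Bool), and for each i : Fin n and each state X define σ_i(X) : Fin n → Bool by σ_i(X) j = M(X) j if j < i and σ_i(X) j = X j otherwise. Suppose M admits a sequentialization in the identity schedule, i.e., there is a family (F_i)_{i : Fin n} of coordinate-update maps (not necessarily monotone) with F_{n-1} ∘ ⋯ ∘ F_1 ∘ F_0 = M. Then there exists a family (G_i)_{i : Fin n} of MONOTONE coordinate-update maps with G_{n-1} ∘ ⋯ ∘ G_1 ∘ G_0 = M if and only if for every i and all states X, Y: σ_i(X) ≤ σ_i(Y) implies M(X) i ≤ M(Y) i (equivalently, each F_i is monotone on the set A_i of intermediate states reached just before updating vertex i, which equals the range of σ_i). -/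
/-- The SDS map for the identity schedule: `F_{n-1} ∘ ⋯ ∘ F_1 ∘ F_0` (vertex 0 updated first). -/
def seqCompId {n : ℕ} (F : Fin n → (Fin n → Bool) → (Fin n → Bool))
    (X : Fin n → Bool) : Fin n → Bool :=
  (List.finRange n).foldl (fun Y i => F i Y) X

/-- The intermediate state just before vertex `i` is updated under the parallel map `M`
with identity schedule: coordinates `j < i` already hold their new value `M X j`. -/
def sigma' {n : ℕ} (M : (Fin n → Bool) → (Fin n → Bool)) (i : Fin n)
    (X : Fin n → Bool) : Fin n → Bool :=
  fun j => if j < i then M X j else X j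

theorem foldl_not_mem {n : ℕ} (G : Fin n → (Fin n → Bool) → (Fin n → Bool))
    (h : ∀ (i : Fin n) (X : Fin n → Bool) (j : Fin n), j ≠ i → G i X j = X j)
    (j : Fin n) (l : List (Fin n)) (X : Fin n → Bool) (hj : j ∉ l) :
    l.foldl (fun Y i => G i Y) X j = X j := by
  induction l generalizing X with
  | nil => rfl
  | cons a l ih =>
    simp only [List.mem_cons, not_or] at hj
    rw [List.foldl_cons, ih _ hj.2, h a X j hj.1]

theorem mem_take_finRange {n : ℕ} (k : ℕ) (j : Fin n) (hj : j ∈ (List.finRange n).take k) :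
    (j : ℕ) < k := by
  obtain ⟨m, hm, rfl⟩ := List.mem_iff_getElem.1 hj
  simp at hm ⊢
  omega

theorem mem_drop_finRange {n : ℕ} (k : ℕ) (j : Fin n) (hj : j ∈ (List.finRange n).drop k) :
    k ≤ (j : ℕ) := by
  obtain ⟨m, hm, rfl⟩ := List.mem_iff_getElem.1 hj
  simp

theorem take_fold_eq {n : ℕ} (G : Fin n → (Fin n → Bool) → (Fin n → Bool))
    (h : ∀ (i : Fin n) (X : Fin n → Bool) (j : Fin n), j ≠ i → G i X j = X j)
    (i : Fin n) (X : Fin n → Bool) :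
    ((List.finRange n).take i).foldl (fun Y i => G i Y) X = sigma' (seqCompId G) i X := by
  funext j
  unfold sigma'
  split_ifs with hji
  · have e : seqCompId G X = ((List.finRange n).drop i).foldl (fun Y i => G i Y)
        (((List.finRange n).take i).foldl (fun Y i => G i Y) X) := by
      rw [← List.foldl_append, List.take_append_drop]; rfl
    rw [e, foldl_not_mem G h j (List.drop _ _)]
    intro hm
    have := mem_drop_finRange _ _ hm
    have : (j : ℕ) < i := hji
    omega
  · rw [foldl_not_mem G h]
    intro hm
    exact hji (mem_take_finRange _ _ hm)

theorem update_sigma {n : ℕ} (G : Fin n → (Fin n → Bool) → (Fin n → Bool))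
    (h : ∀ (i : Fin n) (X : Fin n → Bool) (j : Fin n), j ≠ i → G i X j = X j)
    (i : Fin n) (X : Fin n → Bool) :
    G i (sigma' (seqCompId G) i X) i = seqCompId G X i := by
  have e : seqCompId G X = ((List.finRange n).drop (i + 1)).foldl (fun Y i => G i Y)
      (((List.finRange n).take (i + 1)).foldl (fun Y i => G i Y) X) := by
    rw [← List.foldl_append, List.take_append_drop]; rfl
  rw [← take_fold_eq G h, e, foldl_not_mem G h]
  · rw [List.take_succ_eq_append_getElem (by simp), List.foldl_append]
    simp
  · intro hm
    have := mem_drop_finRange _ _ hm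
    omega

theorem seq_eq_of_update {n : ℕ} (M : (Fin n → Bool) → (Fin n → Bool))
    (G : Fin n → (Fin n → Bool) → (Fin n → Bool))
    (h : ∀ (i : Fin n) (X : Fin n → Bool) (j : Fin n), j ≠ i → G i X j = X j)
    (hG : ∀ i X, G i (sigma' M i X) i = M X i) : seqCompId G = M := by
  funext X
  have key : ∀ m : ℕ, ∀ i : Fin n, (i : ℕ) = m → seqCompId G X i = M X i := by
    intro m
    induction m using Nat.strong_induction_on with
    | _ m ih =>
      intro i hi
      have e : sigma' (seqCompId G) i X = sigma' M i X := by
        funext j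
        unfold sigma'
        split_ifs with hj
        · exact ih j (by have : (j : ℕ) < i := hj
                         omega) j rfl
        · rfl
      rw [← update_sigma G h, e, hG]
  funext i
  exact key i i rfl

theorem stmt_19 {n : ℕ} (M : (Fin n → Bool) → (Fin n → Bool))
    (F : Fin n → (Fin n → Bool) → (Fin n → Bool))
    (hupd : ∀ (i : Fin n) (X : Fin n → Bool) (j : Fin n), j ≠ i → F i X j = X j)
    (hseq : seqCompId F = M) :
    (∃ G : Fin n → (Fin n → Bool) → (Fin n → Bool),
      (∀ (i : Fin n) (X : Fin n → Bool) (j : Fin n), j ≠ i → G i X j = X j) ∧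
      (∀ i : Fin n, Monotone (G i)) ∧ seqCompId G = M) ↔
    (∀ (i : Fin n) (X Y : Fin n → Bool),
      sigma' M i X ≤ sigma' M i Y → M X i ≤ M Y i) := by
  classical
  constructor
  · rintro ⟨G, h, hm, hs⟩ i X Y hXY
    rw [← hs] at hXY ⊢
    rw [← update_sigma G h i X, ← update_sigma G h i Y]
    exact hm i hXY i
  · intro H
    let G : Fin n → (Fin n → Bool) → (Fin n → Bool) := fun i Z =>
      Function.update Z i (decide (∃ X, sigma' M i X ≤ Z ∧ M X i = true))
    have h : ∀ (i : Fin n) (X : Fin n → Bool) (j : Fin n), j ≠ i → G i X j = X j := by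
      intro i X j hj
      simp [G, hj]
    refine ⟨G, h, ?_, seq_eq_of_update M G h ?_⟩
    · intro i Z W hZW j
      by_cases hj : j = i
      · subst hj
        simp only [G, Function.update_self]
        rw [Bool.le_iff_imp]
        simp only [decide_eq_true_eq]
        rintro ⟨X, h1, h2⟩
        exact ⟨X, h1.trans hZW, h2⟩
      · rw [h i Z j hj, h i W j hj]
        exact hZW j
    · intro i X
      simp only [G, Function.update_self]
      rw [Bool.eq_iff_iff, decide_eq_true_eq]
      constructor
      · rintro ⟨Y, h1, h2⟩
        exact Bool.le_iff_imp.1 (H i Y X h1) h2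
      · intro hX
        exact ⟨X, le_rfl, hX⟩
end
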